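/- With the notation below, suppose b_0+b_2 ≢ b_1+b_3 (mod 2), b_0b_2+b_1b_3 ≡ 1 (mod 2), and ββ̄ ≡ −3 (mod 8). Then: (1) if b_0b_2+b_1b_3 ≡ c_0c_2+c_1c_3 (mod 4), then D_4(b)·D_4(c) = (8k−3)(8l−3) for some integer k and some prime 8l−3 ∈ P with k ≡ l (mod 2); (2) if b_0b_2+b_1b_3 ≢ c_0c_2+c_1c_3 (mod 4), then D_4(b)·D_4(c) = (8k−3)(8l−3) for some integer k and some prime 8l−3 ∈ P with k ≢ l (mod 2). -/

import Mathlib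

open Matrix Complex

def D4 (x0 x1 x2 x3 : ℤ) : ℤ :=
  (Matrix.of ![![x0, x1, x2, x3], ![x3, x0, x1, x2], ![x2, x3, x0, x1], ![x1, x2, x3, x0]]).det

def Pset : Set ℤ := {p : ℤ | Prime p ∧ 0 < p ∧ p ≡ -3 [ZMOD 8]}

def bI (a : ℕ → ℤ) (i : ℕ) : ℤ := (a i + a (i + 8)) + (a (i + 4) + a (i + 12))

def cI (a : ℕ → ℤ) (i : ℕ) : ℤ := (a i + a (i + 8)) - (a (i + 4) + a (i + 12))

def dd (a : ℕ → ℤ) (i : ℕ) : ℤ := a i - a (i + 8)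

noncomputable def alphaD (d : ℕ → ℤ) (i : ℕ) : ℂ := (d i : ℂ) + Complex.I * (d (i + 4) : ℂ)

noncomputable def betaD (d : ℕ → ℤ) : ℂ :=
  (alphaD d 0 + alphaD d 2) ^ 2 - (alphaD d 1 + alphaD d 3) ^ 2

noncomputable def gammaD (d : ℕ → ℤ) : ℂ :=
  (alphaD d 0 - alphaD d 2) ^ 2 + (alphaD d 1 - alphaD d 3) ^ 2

theorem D4_eq (x0 x1 x2 x3 : ℤ) :
    D4 x0 x1 x2 x3 =
      ((x0 + x2) ^ 2 - (x1 + x3) ^ 2) * ((x0 - x2) ^ 2 + (x1 - x3) ^ 2) := by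
  simp [D4, Matrix.det_succ_row_zero, Fin.sum_univ_succ, Fin.succAbove]
  ring

theorem betaD_mul_conj (d : ℕ → ℤ) :
    betaD d * (starRingEnd ℂ) (betaD d) =
      (((((d 0 + d 2) ^ 2 + (d 1 + d 3) ^ 2 + (d 4 + d 6) ^ 2 + (d 5 + d 7) ^ 2) ^ 2
        - 4 * ((d 0 + d 2) * (d 1 + d 3) + (d 4 + d 6) * (d 5 + d 7)) ^ 2 : ℤ)) : ℂ) := by
  simp only [betaD, alphaD, map_sub, map_add, map_mul, map_pow, Complex.conj_I, map_intCast]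
  push_cast
  ring_nf
  simp only [show Complex.I ^ 4 = 1 from Complex.I_pow_four, Complex.I_sq]
  ring

theorem Nat.mod_eight_eq_one_of_forall_prime_dvd (n : ℕ) (hn : n ≠ 0)
    (h : ∀ p, p.Prime → p ∣ n → p % 8 = 1) : n % 8 = 1 := by
  induction n using Nat.recOnMul with
  | zero => exact absurd rfl hn
  | one => rfl
  | prime p hp => exact h p hp dvd_rfl
  | mul a b iha ihb =>
    have ha := iha (left_ne_zero_of_mul hn) fun p hp hd => h p hp (hd.mul_right b)
    have hb := ihb (right_ne_zero_of_mul hn) fun p hp hd => h p hp (hd.mul_left a)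
    rw [Nat.mul_mod, ha, hb]

/-- A sum of two squares congruent to `5` modulo `8` has a prime factor congruent to `5`
modulo `8`. -/
theorem Nat.exists_prime_dvd_mod_eight_eq_five {n x y : ℕ} (hxy : n = x ^ 2 + y ^ 2)
    (hn : n % 8 = 5) : ∃ p, p.Prime ∧ p ∣ n ∧ p % 8 = 5 := by
  obtain ⟨a, b, rfl, hb⟩ := Nat.eq_sq_add_sq_iff_eq_sq_mul.mp ⟨x, y, hxy⟩
  by_contra! hno
  have hb1 : b % 8 = 1 := by
    have hb0 : b ≠ 0 := by
      rintro rfl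
      simp at hn
    refine Nat.mod_eight_eq_one_of_forall_prime_dvd b hb0 ?_
    intro p hp hd
    have h3 := Nat.mod_four_ne_three_of_mem_primeFactors_of_isSquare_neg_one
      (Nat.mem_primeFactors.mpr ⟨hp, hd, hb0⟩) hb
    have h5 := hno p hp (hd.mul_left _)
    have h2 : p % 2 = 1 := by
      by_contra h
      have : 2 ∣ a ^ 2 * b := (Nat.dvd_of_mod_eq_zero (by omega)).trans (hd.mul_left _)
      omega
    omega
  have ha : a ^ 2 % 8 = 0 ∨ a ^ 2 % 8 = 1 ∨ a ^ 2 % 8 = 4 := by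
    have : a % 8 < 8 := Nat.mod_lt _ (by norm_num)
    rw [Nat.pow_mod]
    interval_cases a % 8 <;> simp
  rw [Nat.mul_mod, hb1] at hn
  omega

theorem exists_mem_Pset_dvd {x y : ℤ} (h : (x ^ 2 + y ^ 2) % 8 = 5) :
    ∃ l : ℤ, (8 * l - 3) ∈ Pset ∧ 8 * l - 3 ∣ x ^ 2 + y ^ 2 := by
  have hcast : ((x.natAbs ^ 2 + y.natAbs ^ 2 : ℕ) : ℤ) = x ^ 2 + y ^ 2 := by
    push_cast
    simp
  obtain ⟨p, hp, hd, h5⟩ :=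
    Nat.exists_prime_dvd_mod_eight_eq_five (x := x.natAbs) (y := y.natAbs) rfl (by omega)
  have hl : 8 * (((p : ℤ) + 3) / 8) - 3 = p := by omega
  refine ⟨((p : ℤ) + 3) / 8, ?_, ?_⟩
  · rw [hl]
    exact ⟨Nat.prime_iff_prime_int.mp hp, by exact_mod_cast hp.pos,
      by change (p : ℤ) % 8 = -3 % 8; omega⟩
  · rw [hl, ← hcast]
    exact_mod_cast hd

theorem Int.sq_emod_eight_of_emod_two_eq_one {n : ℤ} (h : n % 2 = 1) : n ^ 2 % 8 = 1 := by
  have := Int.eight_dvd_sq_sub_one_of_odd (Int.odd_iff.mpr h)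
  omega

theorem sq_add_sq_mod_eight {x0 x1 x2 x3 : ℤ} (hodd : (x0 + x2 + (x1 + x3)) % 2 = 1)
    (hT : (x0 * x2 + x1 * x3) % 2 = 1) (hPQ : (x0 + x2) * (x1 + x3) % 4 = 0) :
    ((x0 - x2) ^ 2 + (x1 - x3) ^ 2) % 8 = 5 := by
  have hsq := Int.sq_emod_eight_of_emod_two_eq_one hodd
  have : (x0 - x2) ^ 2 + (x1 - x3) ^ 2 = (x0 + x2 + (x1 + x3)) ^ 2
      - 2 * ((x0 + x2) * (x1 + x3)) - 4 * (x0 * x2 + x1 * x3) := by ring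
  omega

theorem D4_mod_sixteen_of_odd {x0 x1 x2 x3 : ℤ} (hP : (x0 + x2) % 2 = 1)
    (hQ : (x1 + x3) % 2 = 0) :
    D4 x0 x1 x2 x3 ≡ 1 - 4 * (x0 * x2 + x1 * x3) [ZMOD 16] := by
  obtain ⟨r, hr⟩ : ∃ r, (x0 + x2) ^ 2 = 8 * r + 1 :=
    ⟨(x0 + x2) ^ 2 / 8, by have := Int.sq_emod_eight_of_emod_two_eq_one hP; omega⟩
  obtain ⟨t, ht⟩ : ∃ t, x1 + x3 = 2 * t := ⟨(x1 + x3) / 2, by omega⟩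
  set T := x0 * x2 + x1 * x3 with hT
  have hN : (x0 - x2) ^ 2 + (x1 - x3) ^ 2 = 8 * r + 1 + (2 * t) ^ 2 - 4 * T := by
    rw [← hr, ← ht, hT]; ring
  rw [D4_eq, hN, hr, ht]
  refine (Int.modEq_iff_dvd.mpr ⟨-(4 * r ^ 2 + r - t ^ 4 - 2 * r * T + t ^ 2 * T), ?_⟩)
  ring

theorem D4_rotate (x0 x1 x2 x3 : ℤ) : D4 x0 x1 x2 x3 = -D4 x1 x2 x3 x0 := by
  rw [D4_eq, D4_eq]; ring

theorem D4_mul_mod_sixteen {x0 x1 x2 x3 y0 y1 y2 y3 : ℤ}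
    (hx : (x0 + x2 + (x1 + x3)) % 2 = 1) (hy : (y0 + y2 + (y1 + y3)) % 2 = 1)
    (hxy : (x0 + x2) % 2 = (y0 + y2) % 2) :
    D4 x0 x1 x2 x3 * D4 y0 y1 y2 y3 ≡
      1 - 4 * (x0 * x2 + x1 * x3 + (y0 * y2 + y1 * y3)) [ZMOD 16] := by
  have key : ∀ S T : ℤ, (1 - 4 * S) * (1 - 4 * T) ≡ 1 - 4 * (S + T) [ZMOD 16] := fun S T =>
    Int.modEq_iff_dvd.mpr ⟨-(S * T), by ring⟩
  rcases Int.emod_two_eq_zero_or_one (x0 + x2) with h | h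
  · rw [D4_rotate x0, D4_rotate y0, neg_mul_neg]
    have e := ((D4_mod_sixteen_of_odd (x0 := x1) (x1 := x2) (x2 := x3) (x3 := x0)
      (by omega) (by omega)).mul (D4_mod_sixteen_of_odd (x0 := y1) (x1 := y2) (x2 := y3)
      (x3 := y0) (by omega) (by omega))).trans (key _ _)
    convert e using 2
    ring
  · exact ((D4_mod_sixteen_of_odd h (by omega)).mul
      (D4_mod_sixteen_of_odd (by omega) (by omega))).trans (key _ _)

theorem odd_of_sq_sub_four_mul_sq {E F : ℤ} (h : (E ^ 2 - 4 * F ^ 2) % 8 = 5) : F % 2 = 1 := by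
  rcases Int.emod_two_eq_zero_or_one F with hF | hF
  · exfalso
    obtain ⟨f, rfl⟩ : ∃ f, F = 2 * f := ⟨F / 2, by omega⟩
    have e : E ^ 2 - 4 * (2 * f) ^ 2 = E ^ 2 - 16 * f ^ 2 := by ring
    rw [e] at h
    rcases Int.emod_two_eq_zero_or_one E with hE | hE
    · obtain ⟨g, rfl⟩ : ∃ g, E = 2 * g := ⟨E / 2, by omega⟩
      have : (2 * g) ^ 2 = 4 * g ^ 2 := by ring
      omega
    · have := Int.sq_emod_eight_of_emod_two_eq_one hE
      omega
  · exact hF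

theorem exists_factorization {M N : ℤ} {x y : ℤ} (hN : N = x ^ 2 + y ^ 2) (h5 : N % 8 = 5)
    (hNM : N ∣ M) (hM : M % 8 = 1) :
    ∃ k l : ℤ, (8 * l - 3) ∈ Pset ∧ M = (8 * k - 3) * (8 * l - 3) := by
  obtain ⟨l, hl, hd⟩ := exists_mem_Pset_dvd (hN ▸ h5)
  obtain ⟨m, rfl⟩ := (hN ▸ hd).trans hNM
  have hm : (8 * l - 3) * m = 8 * (l * m) - 3 * m := by ring
  refine ⟨(m + 3) / 8, l, hl, ?_⟩
  have : 8 * ((m + 3) / 8) - 3 = m := by omega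
  rw [this, mul_comm]

theorem stmt12 (a : ℕ → ℤ) (B : ℤ)
    (hB : (B : ℂ) = betaD (dd a) * (starRingEnd ℂ) (betaD (dd a)))
    (h1 : ¬ (bI a 0 + bI a 2 ≡ bI a 1 + bI a 3 [ZMOD 2]))
    (h2 : bI a 0 * bI a 2 + bI a 1 * bI a 3 ≡ 1 [ZMOD 2])
    (h3 : B ≡ -3 [ZMOD 8]) :
    ((bI a 0 * bI a 2 + bI a 1 * bI a 3 ≡ cI a 0 * cI a 2 + cI a 1 * cI a 3 [ZMOD 4]) →
      ∃ k l : ℤ, (8 * l - 3) ∈ Pset ∧ k ≡ l [ZMOD 2] ∧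
        D4 (bI a 0) (bI a 1) (bI a 2) (bI a 3) * D4 (cI a 0) (cI a 1) (cI a 2) (cI a 3) =
          (8 * k - 3) * (8 * l - 3)) ∧
    ((¬ (bI a 0 * bI a 2 + bI a 1 * bI a 3 ≡ cI a 0 * cI a 2 + cI a 1 * cI a 3 [ZMOD 4])) →
      ∃ k l : ℤ, (8 * l - 3) ∈ Pset ∧ ¬ (k ≡ l [ZMOD 2]) ∧
        D4 (bI a 0) (bI a 1) (bI a 2) (bI a 3) * D4 (cI a 0) (cI a 1) (cI a 2) (cI a 3) =
          (8 * k - 3) * (8 * l - 3)) := by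
  rw [betaD_mul_conj] at hB
  have hBZ := Int.cast_injective hB
  have h3' : B % 8 = 5 := h3
  rw [hBZ] at h3'
  have hF := odd_of_sq_sub_four_mul_sq h3'
  have hodd : (bI a 0 + bI a 2 + (bI a 1 + bI a 3)) % 2 = 1 := by
    unfold Int.ModEq at h1; omega
  have hTb : (bI a 0 * bI a 2 + bI a 1 * bI a 3) % 2 = 1 := h2
  have hcb : ∀ i, cI a i ≡ bI a i [ZMOD 2] := fun i =>
    Int.modEq_iff_dvd.mpr ⟨a (i + 4) + a (i + 12), by simp only [bI, cI]; ring⟩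
  have hTc : (cI a 0 * cI a 2 + cI a 1 * cI a 3) % 2 = 1 :=
    (((hcb 0).mul (hcb 2)).add ((hcb 1).mul (hcb 3))).eq.trans hTb
  have hPbc : (bI a 0 + bI a 2) % 2 = (cI a 0 + cI a 2) % 2 := ((hcb 0).add (hcb 2)).symm
  have hoddc : (cI a 0 + cI a 2 + (cI a 1 + cI a 3)) % 2 = 1 :=
    (((hcb 0).add (hcb 2)).add ((hcb 1).add (hcb 3))).eq.trans hodd
  have hsum : ((bI a 0 + bI a 2) * (bI a 1 + bI a 3) +
      (cI a 0 + cI a 2) * (cI a 1 + cI a 3)) % 4 = 2 := by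
    have hs : ∀ i, dd a i ≡ a i + a (i + 8) [ZMOD 2] := fun i =>
      Int.modEq_iff_dvd.mpr ⟨a (i + 8), by simp only [dd]; ring⟩
    have hF' := ((((hs 0).add (hs 2)).mul ((hs 1).add (hs 3))).add
      (((hs 4).add (hs 6)).mul ((hs 5).add (hs 7)))).symm.eq.trans hF
    have e : (bI a 0 + bI a 2) * (bI a 1 + bI a 3) + (cI a 0 + cI a 2) * (cI a 1 + cI a 3) =
        2 * ((a 0 + a (0 + 8) + (a 2 + a (2 + 8))) * (a 1 + a (1 + 8) + (a 3 + a (3 + 8))) +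
        (a 4 + a (4 + 8) + (a 6 + a (6 + 8))) * (a 5 + a (5 + 8) + (a 7 + a (7 + 8)))) := by
      simp only [bI, cI, Nat.reduceAdd]; ring
    omega
  have heven : ∀ P Q : ℤ, (P + Q) % 2 = 1 → P * Q % 2 = 0 := by
    intro P Q h
    rcases Int.emod_two_eq_zero_or_one P with hP | hP
    · simp [Int.mul_emod, hP]
    · simp [Int.mul_emod, show Q % 2 = 0 by omega]
  have hPQb := heven _ _ hodd
  have hM := D4_mul_mod_sixteen hodd hoddc hPbc
  unfold Int.ModEq at hM
  obtain ⟨k, l, hl, hkl⟩ : ∃ k l : ℤ, (8 * l - 3) ∈ Pset ∧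
      D4 (bI a 0) (bI a 1) (bI a 2) (bI a 3) * D4 (cI a 0) (cI a 1) (cI a 2) (cI a 3) =
        (8 * k - 3) * (8 * l - 3) := by
    by_cases h4 : (bI a 0 + bI a 2) * (bI a 1 + bI a 3) % 4 = 0
    · refine exists_factorization rfl (sq_add_sq_mod_eight hodd hTb h4) ?_ (by omega)
      rw [D4_eq]
      exact (dvd_mul_left _ _).mul_right _
    · refine exists_factorization rfl (sq_add_sq_mod_eight hoddc hTc (by omega)) ?_ (by omega)
      rw [D4_eq (cI a 0)]
      exact (dvd_mul_left _ _).mul_left _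
  have hexp : (8 * k - 3) * (8 * l - 3) = 64 * (k * l) - 24 * (k + l) + 9 := by ring
  unfold Int.ModEq
  exact ⟨fun h => ⟨k, l, hl, by omega, hkl⟩, fun h => ⟨k, l, hl, by omega, hkl⟩⟩
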